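/- arXiv:math/0603035 — 2 statements merged into one kernel-verified Lean document; each statement's English description precedes it below -/
import Mathlib

section
/- Let m, n ≥ 1 and let (H_ε)_{ε∈(0,1]} be a net in E_τ(ℝ^{m+n}). Suppose that for every net (f_ε)_{ε∈(0,1]} in E_S(ℝ^n), the net (x ↦ ∫_{ℝ^n} H_ε(x,y) f_ε(y) dy)_{ε∈(0,1]} belongs to N_τ(ℝ^m). Then (H_ε)_{ε∈(0,1]} belongs to N_τ(ℝ^{m+n}). Equivalently, the map sending a tempered generalized kernel H ∈ E_τ(ℝ^{m+n})/N_τ(ℝ^{m+n}) to the induced integral operator from E_S(ℝ^n)/N_S(ℝ^n) to E_τ(ℝ^m)/N_τ(ℝ^m) is injective. -/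
open MeasureTheory Filter

noncomputable def mu {E : Type*} [NormedAddCommGroup E] [NormedSpace ℝ E]
    (r : ℤ) (l : ℕ) (f : E → ℂ) : ENNReal :=
  ⨆ (x : E) (i : ℕ) (_ : i ≤ l),
    ENNReal.ofReal ((1 + ‖x‖) ^ r * ‖iteratedFDeriv ℝ i f x‖)

def IsOEps (g : ℝ → ENNReal) (h : ℝ → ℝ) : Prop :=
  ∃ C > (0:ℝ), ∃ η > (0:ℝ), ∀ ε : ℝ, 0 < ε → ε ≤ η → g ε ≤ ENNReal.ofReal (C * h ε)

def SchwartzLike {E : Type*} [NormedAddCommGroup E] [NormedSpace ℝ E] (f : E → ℂ) : Prop :=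
  ContDiff ℝ (⊤ : ℕ∞) f ∧ ∀ q l : ℕ, mu (q : ℤ) l f < ⊤

def TemperateGrowth' {E : Type*} [NormedAddCommGroup E] [NormedSpace ℝ E] (f : E → ℂ) : Prop :=
  ContDiff ℝ (⊤ : ℕ∞) f ∧ ∀ l : ℕ, ∃ q : ℕ, mu (-(q:ℤ)) l f < ⊤

def IsESNet {E : Type*} [NormedAddCommGroup E] [NormedSpace ℝ E] (f : ℝ → E → ℂ) : Prop :=
  (∀ ε ∈ Set.Ioc (0:ℝ) 1, SchwartzLike (f ε)) ∧
  ∀ q l : ℕ, ∃ N : ℕ, IsOEps (fun ε => mu (q:ℤ) l (f ε)) (fun ε => ε ^ (-(N:ℤ)))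

def IsNSNet {E : Type*} [NormedAddCommGroup E] [NormedSpace ℝ E] (f : ℝ → E → ℂ) : Prop :=
  (∀ ε ∈ Set.Ioc (0:ℝ) 1, SchwartzLike (f ε)) ∧
  ∀ q l p : ℕ, IsOEps (fun ε => mu (q:ℤ) l (f ε)) (fun ε => ε ^ p)

def IsEtauNet {E : Type*} [NormedAddCommGroup E] [NormedSpace ℝ E] (f : ℝ → E → ℂ) : Prop :=
  (∀ ε ∈ Set.Ioc (0:ℝ) 1, TemperateGrowth' (f ε)) ∧
  ∀ l : ℕ, ∃ q N : ℕ, IsOEps (fun ε => mu (-(q:ℤ)) l (f ε)) (fun ε => ε ^ (-(N:ℤ)))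

def IsNtauNet {E : Type*} [NormedAddCommGroup E] [NormedSpace ℝ E] (f : ℝ → E → ℂ) : Prop :=
  (∀ ε ∈ Set.Ioc (0:ℝ) 1, TemperateGrowth' (f ε)) ∧
  ∀ l : ℕ, ∃ q : ℕ, ∀ p : ℕ, IsOEps (fun ε => mu (-(q:ℤ)) l (f ε)) (fun ε => ε ^ p)

noncomputable def scaled {d : ℕ} (ρ : (Fin d → ℝ) → ℂ) (t : ℝ) (x : Fin d → ℝ) : ℂ :=
  ((t ^ (-(d:ℤ)) : ℝ) : ℂ) * ρ (t⁻¹ • x)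

def IsMollifier {d : ℕ} (ρ : SchwartzMap (Fin d → ℝ) ℂ) : Prop :=
  (∫ x : Fin d → ℝ, ρ x) = 1 ∧
  ∀ α : Fin d → ℕ, α ≠ 0 → (∫ x : Fin d → ℝ, (∏ j, (x j : ℂ) ^ (α j)) * ρ x) = 0

def MemLa (a : ℝ) (N : ℕ → ℝ) : Prop :=
  (∀ l, 0 ≤ N l) ∧
  ((a = 0 ∧ Filter.Tendsto (fun l : ℕ => N l / (l:ℝ)) Filter.atTop (nhds 0)) ∨
   (0 < a ∧ Filter.limsup (fun l : ℕ => N l / (l:ℝ)) Filter.atTop < a))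

def IsESLNet {E : Type*} [NormedAddCommGroup E] [NormedSpace ℝ E]
    (a : ℝ) (f : ℝ → E → ℂ) : Prop :=
  (∀ ε ∈ Set.Ioc (0:ℝ) 1, SchwartzLike (f ε)) ∧
  ∃ N : ℕ → ℝ, MemLa a N ∧
    ∀ q l : ℕ, IsOEps (fun ε => mu (q:ℤ) l (f ε)) (fun ε => ε ^ (-(N l)))

def IsEtauLNet {E : Type*} [NormedAddCommGroup E] [NormedSpace ℝ E]
    (c : ℝ) (f : ℝ → E → ℂ) : Prop :=
  (∀ ε ∈ Set.Ioc (0:ℝ) 1, TemperateGrowth' (f ε)) ∧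
  ∃ N : ℕ → ℝ, MemLa c N ∧ ∃ q : ℕ, ∀ l : ℕ,
    IsOEps (fun ε => mu (-(q:ℤ)) l (f ε)) (fun ε => ε ^ (-(N l)))

def IsESinfNet {E : Type*} [NormedAddCommGroup E] [NormedSpace ℝ E] (f : ℝ → E → ℂ) : Prop :=
  (∀ ε ∈ Set.Ioc (0:ℝ) 1, SchwartzLike (f ε)) ∧
  ∃ N : ℕ, ∀ q l : ℕ, IsOEps (fun ε => mu (q:ℤ) l (f ε)) (fun ε => ε ^ (-(N:ℤ)))

def ModerateNetMaps (m n : ℕ)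
    (L : ℝ → SchwartzMap (Fin n → ℝ) ℂ → ((Fin m → ℝ) → ℂ)) : Prop :=
  (∀ ε ∈ Set.Ioc (0:ℝ) 1, ∀ f, TemperateGrowth' (L ε f)) ∧
  ∀ l : ℕ, ∃ C : ℝ → ℝ, (∀ ε, 0 ≤ C ε) ∧
    (∃ N : ℕ, ∃ C₀ > (0:ℝ), ∃ η > (0:ℝ), ∀ ε : ℝ, 0 < ε → ε ≤ η → C ε ≤ C₀ * ε ^ (-(N:ℤ))) ∧
    ∃ p q l' : ℕ, ∃ η > (0:ℝ), ∀ ε : ℝ, 0 < ε → ε ≤ η →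
      ∀ f : SchwartzMap (Fin n → ℝ) ℂ,
        mu (-(p:ℤ)) l (L ε f) ≤ ENNReal.ofReal (C ε) * mu (q:ℤ) l' ⇑f

def NegligibleNetMaps (m n : ℕ)
    (L : ℝ → SchwartzMap (Fin n → ℝ) ℂ → ((Fin m → ℝ) → ℂ)) : Prop :=
  (∀ ε ∈ Set.Ioc (0:ℝ) 1, ∀ f, TemperateGrowth' (L ε f)) ∧
  ∀ l : ℕ, ∃ C : ℝ → ℝ, (∀ ε, 0 ≤ C ε) ∧
    (∀ p' : ℕ, ∃ C₀ > (0:ℝ), ∃ η > (0:ℝ), ∀ ε : ℝ, 0 < ε → ε ≤ η → C ε ≤ C₀ * ε ^ p') ∧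
    ∃ p q l' : ℕ, ∃ η > (0:ℝ), ∀ ε : ℝ, 0 < ε → ε ≤ η →
      ∀ f : SchwartzMap (Fin n → ℝ) ℂ,
        mu (-(p:ℤ)) l (L ε f) ≤ ENNReal.ofReal (C ε) * mu (q:ℤ) l' ⇑f

def StronglyModerateWith (m n : ℕ)
    (L : ℝ → SchwartzMap (Fin n → ℝ) ℂ → ((Fin m → ℝ) → ℂ))
    (lam : ℕ → ℕ) (r : ℕ → ℝ) : Prop :=
  (∀ ε ∈ Set.Ioc (0:ℝ) 1, ∀ f, TemperateGrowth' (L ε f)) ∧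
  (∀ l, 0 ≤ r l) ∧
  ∀ l : ℕ, ∃ C ≥ (0:ℝ), ∃ p q : ℕ, ∃ η > (0:ℝ), ∀ ε : ℝ, 0 < ε → ε ≤ η →
    ∀ f : SchwartzMap (Fin n → ℝ) ℂ,
      mu (-(p:ℤ)) l (L ε f) ≤ ENNReal.ofReal (C * ε ^ (-(r l))) * mu (q:ℤ) (lam l) ⇑f

def ContinuousIntoOM (m n : ℕ) (L : SchwartzMap (Fin n → ℝ) ℂ → ((Fin m → ℝ) → ℂ)) : Prop :=
  ∀ l : ℕ, ∃ C ≥ (0:ℝ), ∃ p q l' : ℕ, ∀ f,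
    mu (-(p:ℤ)) l (L f) ≤ ENNReal.ofReal C * mu (q:ℤ) l' ⇑f

noncomputable def muOn {d : ℕ} (Ω : Set (Fin d → ℝ)) (r : ℤ) (l : ℕ)
    (f : (Fin d → ℝ) → ℂ) : ENNReal :=
  ⨆ (x : Ω) (i : ℕ) (_ : i ≤ l),
    ENNReal.ofReal ((1 + ‖(x : Fin d → ℝ)‖) ^ r * ‖iteratedFDerivWithin ℝ i f Ω (x : Fin d → ℝ)‖)

def IsBox {d : ℕ} (Ω : Set (Fin d → ℝ)) : Prop :=
  ∃ I : Fin d → Set ℝ, (∀ j, IsOpen (I j) ∧ Convex ℝ (I j)) ∧ Ω = Set.univ.pi I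

def IsRegularSet (R : Set (ℕ → ℝ)) : Prop :=
  R.Nonempty ∧ (∀ N ∈ R, ∀ n, 0 ≤ N n) ∧
  (∀ N ∈ R, ∀ k : ℕ, ∃ N' ∈ R, ∀ n, N n + k ≤ N' n) ∧
  (∀ N₁ ∈ R, ∀ N₂ ∈ R, ∃ N ∈ R, ∀ n, max (N₁ n) (N₂ n) ≤ N n) ∧
  (∀ N₁ ∈ R, ∀ N₂ ∈ R, ∃ N ∈ R, ∀ l₁ l₂ : ℕ, N₁ l₁ + N₂ l₂ ≤ N (l₁ + l₂))

def IsESRNet {E : Type*} [NormedAddCommGroup E] [NormedSpace ℝ E]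
    (R : Set (ℕ → ℝ)) (f : ℝ → E → ℂ) : Prop :=
  (∀ ε ∈ Set.Ioc (0:ℝ) 1, SchwartzLike (f ε)) ∧
  ∃ N ∈ R, ∀ q l : ℕ, IsOEps (fun ε => mu (q:ℤ) l (f ε)) (fun ε => ε ^ (-(N l)))

def IsEtauRNet {E : Type*} [NormedAddCommGroup E] [NormedSpace ℝ E]
    (R : Set (ℕ → ℝ)) (f : ℝ → E → ℂ) : Prop :=
  (∀ ε ∈ Set.Ioc (0:ℝ) 1, TemperateGrowth' (f ε)) ∧
  ∃ N ∈ R, ∃ q : ℕ, ∀ l : ℕ,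
    IsOEps (fun ε => mu (-(q:ℤ)) l (f ε)) (fun ε => ε ^ (-(N l)))

noncomputable def pderiv' {d : ℕ} (j : Fin d) (f : (Fin d → ℝ) → ℂ) : (Fin d → ℝ) → ℂ :=
  fun x => fderiv ℝ f x (Pi.single j 1)

noncomputable def multiDeriv {d : ℕ} : List (Fin d) → ((Fin d → ℝ) → ℂ) → ((Fin d → ℝ) → ℂ)
  | [], f => f
  | j :: js, f => pderiv' j (multiDeriv js f)

open scoped ContDiff

section Seminorms

variable {E : Type*} [NormedAddCommGroup E] [NormedSpace ℝ E]

lemma mu_neg_le_ofReal_iff (q l : ℕ) (f : E → ℂ) {B : ℝ} (hB : 0 ≤ B) :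
    mu (-(q : ℤ)) l f ≤ ENNReal.ofReal B ↔
      ∀ x, ∀ i ≤ l, ‖iteratedFDeriv ℝ i f x‖ ≤ B * (1 + ‖x‖) ^ q := by
  simp only [mu, iSup_le_iff]
  refine forall₃_congr fun x i _ => ?_
  have h : 0 < (1 + ‖x‖) ^ q := by positivity
  rw [ENNReal.ofReal_le_ofReal_iff hB, zpow_neg, zpow_natCast, inv_mul_le_iff₀ h, mul_comm]

lemma mu_natCast_le_ofReal_iff (q l : ℕ) (f : E → ℂ) {B : ℝ} (hB : 0 ≤ B) :
    mu (q : ℤ) l f ≤ ENNReal.ofReal B ↔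
      ∀ x, ∀ i ≤ l, (1 + ‖x‖) ^ q * ‖iteratedFDeriv ℝ i f x‖ ≤ B := by
  simp only [mu, iSup_le_iff]
  refine forall₃_congr fun x i _ => ?_
  rw [ENNReal.ofReal_le_ofReal_iff hB, zpow_natCast]

/-- Asymptotic bounds on the seminorms of a net, in pointwise form. -/
lemma isOEps_mu_neg_iff (q l : ℕ) (f : ℝ → E → ℂ) (h : ℝ → ℝ) (hh : ∀ ε, 0 < ε → 0 ≤ h ε) :
    IsOEps (fun ε => mu (-(q : ℤ)) l (f ε)) h ↔
      ∃ C > (0 : ℝ), ∃ η > (0 : ℝ), ∀ ε : ℝ, 0 < ε → ε ≤ η →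
        ∀ x, ∀ i ≤ l, ‖iteratedFDeriv ℝ i (f ε) x‖ ≤ C * h ε * (1 + ‖x‖) ^ q := by
  refine exists_congr fun C => and_congr_right fun hC => exists_congr fun η =>
    and_congr_right fun _ => forall₃_congr fun ε hε _ => ?_
  exact mu_neg_le_ofReal_iff q l (f ε) (mul_nonneg hC.le (hh ε hε))

lemma one_add_norm_pow_le_of_dist_le_one {E : Type*} [SeminormedAddCommGroup E] {z w : E}
    (h : ‖w - z‖ ≤ 1) (q : ℕ) :
    (1 + ‖w‖) ^ q ≤ 2 ^ q * (1 + ‖z‖) ^ q := by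
  rw [← mul_pow]
  have : ‖w‖ ≤ ‖z‖ + ‖w - z‖ := by simpa using norm_add_le z (w - z)
  gcongr
  linarith [norm_nonneg z]

/-- Landau-type interpolation: growth bounds on the derivatives of order `i` and `i + 2`
control the derivative of order `i + 1`. -/
lemma norm_iteratedFDeriv_succ_le_of_bounds {f : E → ℂ} (hf : ContDiff ℝ ∞ f) {i q : ℕ}
    {A B h : ℝ} (hA : 0 ≤ A) (hB : 0 ≤ B) (hh : 0 < h) (hh1 : h ≤ 1)
    (hfA : ∀ z, ‖iteratedFDeriv ℝ i f z‖ ≤ A * (1 + ‖z‖) ^ q)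
    (hfB : ∀ z, ‖iteratedFDeriv ℝ (i + 2) f z‖ ≤ B * (1 + ‖z‖) ^ q) (z : E) :
    ‖iteratedFDeriv ℝ (i + 1) f z‖ ≤ 2 ^ q * (2 * (A / h) + B * h) * (1 + ‖z‖) ^ q := by
  have hdiff : ∀ k, Differentiable ℝ (iteratedFDeriv ℝ k f) := fun k =>
    hf.differentiable_iteratedFDeriv (by exact_mod_cast WithTop.coe_lt_top k)
  set W := 2 ^ q * (1 + ‖z‖) ^ q with hW
  have hW0 : 0 ≤ W := by positivity
  have hball : ∀ w ∈ Metric.closedBall z h, ‖w - z‖ ≤ h := fun w hw => by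
    simpa [dist_eq_norm] using hw
  have hweight : ∀ w ∈ Metric.closedBall z h, (1 + ‖w‖) ^ q ≤ W := fun w hw =>
    one_add_norm_pow_le_of_dist_le_one ((hball w hw).trans hh1) q
  have hz : z ∈ Metric.closedBall z h := Metric.mem_closedBall_self hh.le
  have hlip : ∀ w ∈ Metric.closedBall z h,
      ‖fderiv ℝ (iteratedFDeriv ℝ i f) w - fderiv ℝ (iteratedFDeriv ℝ i f) z‖ ≤ B * W * h := by
    intro w hw
    have hiso : ‖fderiv ℝ (iteratedFDeriv ℝ i f) w - fderiv ℝ (iteratedFDeriv ℝ i f) z‖ =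
        ‖iteratedFDeriv ℝ (i + 1) f w - iteratedFDeriv ℝ (i + 1) f z‖ := by
      rw [fderiv_iteratedFDeriv]
      exact (dist_eq_norm _ _).symm.trans
        (((continuousMultilinearCurryLeftEquiv ℝ (fun _ : Fin (i + 1) => E) ℂ).dist_map
          _ _).trans (dist_eq_norm _ _))
    rw [hiso]
    refine ((convex_closedBall z h).norm_image_sub_le_of_norm_fderiv_le (𝕜 := ℝ) (C := B * W)
      (fun x _ => hdiff (i + 1) x) (fun x hx => ?_) hz hw).trans ?_
    · rw [norm_fderiv_iteratedFDeriv]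
      exact (hfB x).trans (by gcongr; exact hweight x hx)
    · gcongr
      exact hball w hw
  rw [← norm_fderiv_iteratedFDeriv]
  refine ContinuousLinearMap.opNorm_le_of_unit_norm (by positivity) fun v hv => ?_
  have hwv : z + h • v ∈ Metric.closedBall z h := by
    simp [dist_eq_norm, norm_smul, hv, abs_of_pos hh]
  have key := (convex_closedBall z h).norm_image_sub_le_of_norm_fderiv_le' (𝕜 := ℝ)
    (fun x _ => hdiff i x) hlip hz hwv
  rw [add_sub_cancel_left, map_smul, norm_smul h v, hv, mul_one, Real.norm_of_nonneg hh.le] at key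
  have h1 : ‖iteratedFDeriv ℝ i f (z + h • v)‖ ≤ A * W :=
    (hfA _).trans (by gcongr; exact hweight _ hwv)
  have h2 : ‖iteratedFDeriv ℝ i f z‖ ≤ A * W := (hfA _).trans (by gcongr; exact hweight _ hz)
  have h3 : h * ‖fderiv ℝ (iteratedFDeriv ℝ i f) z v‖ ≤ 2 * (A * W) + B * W * h * h := by
    calc h * ‖fderiv ℝ (iteratedFDeriv ℝ i f) z v‖
        = ‖h • fderiv ℝ (iteratedFDeriv ℝ i f) z v‖ := by
          rw [norm_smul, Real.norm_of_nonneg hh.le]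
      _ = ‖(iteratedFDeriv ℝ i f (z + h • v) - iteratedFDeriv ℝ i f z) -
            (iteratedFDeriv ℝ i f (z + h • v) - iteratedFDeriv ℝ i f z -
              h • fderiv ℝ (iteratedFDeriv ℝ i f) z v)‖ := by rw [sub_sub_cancel]
      _ ≤ _ := (norm_sub_le _ _).trans (by
          have := norm_sub_le (iteratedFDeriv ℝ i f (z + h • v)) (iteratedFDeriv ℝ i f z)
          linarith)
  rw [mul_comm, ← le_div_iff₀ hh] at h3
  refine h3.trans_eq ?_
  rw [hW]
  field_simp

/-- A moderate net whose zeroth-order seminorms are negligible is negligible. -/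
lemma IsEtauNet.isNtauNet_of_zeroth_order {H : ℝ → E → ℂ} (hH : IsEtauNet H) {q : ℕ}
    (h0 : ∀ p : ℕ, IsOEps (fun ε => mu (-(q : ℤ)) 0 (H ε)) (fun ε => ε ^ p)) :
    IsNtauNet H := by
  refine ⟨hH.1, fun l => ?_⟩
  induction l with
  | zero => exact ⟨q, h0⟩
  | succ l ih =>
    obtain ⟨q₁, hq₁⟩ := ih
    obtain ⟨q₂, N, hq₂⟩ := hH.2 (l + 2)
    refine ⟨max q₁ q₂, fun p => ?_⟩
    have hneg := hq₁ (N + 2 * p)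
    rw [isOEps_mu_neg_iff _ _ _ _ (fun ε hε => by positivity)] at hneg hq₂ ⊢
    obtain ⟨C₁, hC₁, η₁, hη₁, H₁⟩ := hneg
    obtain ⟨C₂, hC₂, η₂, hη₂, H₂⟩ := hq₂
    refine ⟨C₁ + 2 ^ max q₁ q₂ * (2 * C₁ + C₂), by positivity, min 1 (min η₁ η₂),
      by positivity, fun ε hε hle x i hi => ?_⟩
    simp only [le_min_iff] at hle
    obtain ⟨hε1, hεη₁, hεη₂⟩ := hle
    have B₁ : ∀ z, ∀ j ≤ l, ‖iteratedFDeriv ℝ j (H ε) z‖ ≤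
        C₁ * ε ^ (N + 2 * p) * (1 + ‖z‖) ^ max q₁ q₂ := fun z j hj =>
      (H₁ ε hε hεη₁ z j hj).trans (by
        gcongr
        · linarith [norm_nonneg z]
        · exact le_max_left _ _)
    have B₂ : ∀ z, ‖iteratedFDeriv ℝ (l + 2) (H ε) z‖ ≤
        C₂ * ε ^ (-(N : ℤ)) * (1 + ‖z‖) ^ max q₁ q₂ := fun z =>
      (H₂ ε hε hεη₂ z _ le_rfl).trans (by
        gcongr
        · linarith [norm_nonneg z]
        · exact le_max_right _ _)
    rcases Nat.lt_or_eq_of_le hi with hi | rfl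
    · refine (B₁ x i (by omega)).trans ?_
      have : ε ^ (N + 2 * p) ≤ ε ^ p := pow_le_pow_of_le_one hε.le hε1 (by omega)
      have : 0 ≤ 2 ^ max q₁ q₂ * (2 * C₁ + C₂) := by positivity
      gcongr
      linarith
    · refine (norm_iteratedFDeriv_succ_le_of_bounds (hH.1 ε ⟨hε, hε1⟩).1 (h := ε ^ (N + p))
        (by positivity) (by positivity) (by positivity) (pow_le_one₀ hε.le hε1)
        (fun z => B₁ z l le_rfl) B₂ x).trans ?_
      have e₁ : C₁ * ε ^ (N + 2 * p) / ε ^ (N + p) = C₁ * ε ^ p := by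
        field_simp
        ring
      have e₂ : C₂ * ε ^ (-(N : ℤ)) * ε ^ (N + p) = C₂ * ε ^ p := by
        rw [zpow_neg, zpow_natCast]
        field_simp
        ring
      rw [e₁, e₂]
      refine mul_le_mul_of_nonneg_right ?_ (by positivity)
      have : 0 ≤ C₁ * ε ^ p := by positivity
      linarith

end Seminorms

section Mollifier

variable {n : ℕ}

/-- The function `φ`, concentrated at scale `s` around the point `c`. -/
noncomputable def concentrate (φ : (Fin n → ℝ) → ℝ) (s : ℝ) (c y : Fin n → ℝ) : ℂ :=
  (((s ^ n)⁻¹ * φ (s⁻¹ • (y - c)) : ℝ) : ℂ)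

lemma exists_smooth_unit_mass (n : ℕ) : ∃ φ : (Fin n → ℝ) → ℝ, ContDiff ℝ ∞ φ ∧
    (∀ y, 0 ≤ φ y) ∧ ∫ y, φ y = 1 ∧ HasCompactSupport φ ∧
    tsupport φ ⊆ Metric.closedBall 0 1 := by
  let b : ContDiffBump (0 : Fin n → ℝ) := ⟨1 / 2, 1, by norm_num, by norm_num⟩
  exact ⟨b.normed volume, b.contDiff_normed, b.nonneg_normed, b.integral_normed,
    b.hasCompactSupport_normed, b.tsupport_normed_eq.subset⟩

variable {φ : (Fin n → ℝ) → ℝ}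

lemma contDiff_concentrate (hφ : ContDiff ℝ ∞ φ) (s : ℝ) (c : Fin n → ℝ) :
    ContDiff ℝ ∞ (concentrate φ s c) := by
  have h : ContDiff ℝ ∞ fun y => (s ^ n)⁻¹ * φ (s⁻¹ • (y - c)) := by fun_prop
  exact Complex.ofRealCLM.contDiff.comp h

lemma concentrate_eq_zero (hsupp : tsupport φ ⊆ Metric.closedBall 0 1) {s : ℝ} (hs : 0 < s)
    {c y : Fin n → ℝ} (hy : s < ‖y - c‖) : concentrate φ s c y = 0 := by
  have : s⁻¹ • (y - c) ∉ tsupport φ := fun h => by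
    have := hsupp h
    rw [mem_closedBall_zero_iff, norm_smul, norm_inv, Real.norm_of_nonneg hs.le,
      inv_mul_le_iff₀ hs] at this
    linarith
  simp [concentrate, image_eq_zero_of_notMem_tsupport this]

lemma tsupport_concentrate_subset (hsupp : tsupport φ ⊆ Metric.closedBall 0 1) {s : ℝ}
    (hs : 0 < s) (c : Fin n → ℝ) :
    tsupport (concentrate φ s c) ⊆ Metric.closedBall c s := by
  refine closure_minimal (fun y hy => ?_) Metric.isClosed_closedBall
  by_contra h
  rw [Metric.mem_closedBall, dist_eq_norm, not_le] at h
  exact hy (concentrate_eq_zero hsupp hs h)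

lemma hasCompactSupport_concentrate (hsupp : tsupport φ ⊆ Metric.closedBall 0 1) {s : ℝ}
    (hs : 0 < s) (c : Fin n → ℝ) : HasCompactSupport (concentrate φ s c) :=
  (isCompact_closedBall c s).of_isClosed_subset (isClosed_tsupport _)
    (tsupport_concentrate_subset hsupp hs c)

lemma integral_concentrate_weight (hint : ∫ y, φ y = 1) {s : ℝ} (hs : 0 < s) (c : Fin n → ℝ) :
    ∫ y, (s ^ n)⁻¹ * φ (s⁻¹ • (y - c)) = 1 := by
  rw [integral_const_mul, integral_sub_right_eq_self (fun y => φ (s⁻¹ • y)) c,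
    Measure.integral_comp_inv_smul, hint]
  have : s ^ n ≠ 0 := by positivity
  simp [abs_of_pos hs, this]

/-- All derivatives of `concentrate φ s c` of order at most `l` are bounded by a fixed
negative power of the scale `s`. -/
lemma exists_norm_iteratedFDeriv_concentrate_le (hφ : ContDiff ℝ ∞ φ)
    (hcomp : HasCompactSupport φ) (l : ℕ) :
    ∃ D > 0, ∀ s : ℝ, 0 < s → s ≤ 1 → ∀ c y : Fin n → ℝ, ∀ i ≤ l,
      ‖iteratedFDeriv ℝ i (concentrate φ s c) y‖ ≤ D * (s ^ (n + l))⁻¹ := by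
  let ψ : (Fin n → ℝ) → ℂ := fun y => (φ y : ℂ)
  have hψ : ContDiff ℝ ∞ ψ := Complex.ofRealCLM.contDiff.comp hφ
  have hψc : HasCompactSupport ψ := hcomp.comp_left (g := fun r : ℝ => (r : ℂ)) (by simp)
  have hbdd : ∀ i, ∃ D, ∀ y, ‖iteratedFDeriv ℝ i ψ y‖ ≤ D := fun i =>
    (hψ.continuous_iteratedFDeriv (by exact_mod_cast le_top)).bounded_above_of_compact_support
      (hψc.iteratedFDeriv i)
  choose D hD using hbdd
  have hD0 : ∀ i, 0 ≤ D i := fun i => (norm_nonneg _).trans (hD i 0)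
  refine ⟨∑ i ∈ Finset.range (l + 1), D i + 1,
    add_pos_of_nonneg_of_pos (Finset.sum_nonneg fun i _ => hD0 i) one_pos,
    fun s hs hs1 c y i hi => ?_⟩
  have hψi : ContDiff ℝ i ψ := hψ.of_le (by exact_mod_cast le_top)
  have heq : concentrate φ s c = (s ^ n)⁻¹ • fun z => (fun w => ψ (s⁻¹ • w)) (z - c) := by
    ext z
    simp [concentrate, ψ]
  rw [heq, iteratedFDeriv_const_smul_apply (by fun_prop), iteratedFDeriv_comp_sub (f := fun w => ψ (s⁻¹ • w)),
    iteratedFDeriv_comp_const_smul _ hψi, norm_smul, norm_smul, norm_pow, norm_inv, norm_inv,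
    norm_pow, Real.norm_of_nonneg hs.le, pow_add, mul_inv, inv_pow]
  have h1 : D i ≤ ∑ i ∈ Finset.range (l + 1), D i + 1 := by
    have := Finset.single_le_sum (fun i _ => hD0 i) (Finset.mem_range.2 (Nat.lt_succ_of_le hi))
    linarith
  have h2 : (s ^ i)⁻¹ ≤ (s ^ l)⁻¹ :=
    inv_anti₀ (by positivity) (pow_le_pow_of_le_one hs.le hs1 hi)
  calc (s ^ n)⁻¹ * ((s ^ i)⁻¹ * ‖iteratedFDeriv ℝ i ψ (s⁻¹ • (y - c))‖)
      ≤ (s ^ n)⁻¹ * ((s ^ l)⁻¹ * (∑ i ∈ Finset.range (l + 1), D i + 1)) := by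
        gcongr
        exact (hD i _).trans h1
    _ = _ := by ring

lemma exists_mu_concentrate_le (hφ : ContDiff ℝ ∞ φ) (hcomp : HasCompactSupport φ)
    (hsupp : tsupport φ ⊆ Metric.closedBall 0 1) (q l : ℕ) :
    ∃ D > 0, ∀ s : ℝ, 0 < s → s ≤ 1 → ∀ c : Fin n → ℝ,
      mu (q : ℤ) l (concentrate φ s c) ≤
        ENNReal.ofReal (D * (s ^ (n + l))⁻¹ * (1 + ‖c‖) ^ q) := by
  obtain ⟨D, hD, hbound⟩ := exists_norm_iteratedFDeriv_concentrate_le hφ hcomp l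
  refine ⟨2 ^ q * D, by positivity, fun s hs hs1 c => ?_⟩
  rw [mu_natCast_le_ofReal_iff _ _ _ (by positivity)]
  intro y i hi
  by_cases hy : y ∈ tsupport (concentrate φ s c)
  · have hyc : ‖y - c‖ ≤ 1 := by
      have := tsupport_concentrate_subset hsupp hs c hy
      rw [Metric.mem_closedBall, dist_eq_norm] at this
      exact this.trans hs1
    calc (1 + ‖y‖) ^ q * ‖iteratedFDeriv ℝ i (concentrate φ s c) y‖
        ≤ (2 ^ q * (1 + ‖c‖) ^ q) * (D * (s ^ (n + l))⁻¹) := by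
          gcongr
          · exact one_add_norm_pow_le_of_dist_le_one hyc q
          · exact hbound s hs hs1 c y i hi
      _ = _ := by ring
  · have : iteratedFDeriv ℝ i (concentrate φ s c) y = 0 := by
      by_contra h
      exact hy (support_iteratedFDeriv_subset i h)
    rw [this, norm_zero, mul_zero]
    positivity

/-- Concentrating at scale `ε ^ M` around points of moderate growth gives a moderate net. -/
lemma isESNet_concentrate (hφ : ContDiff ℝ ∞ φ) (hcomp : HasCompactSupport φ)
    (hsupp : tsupport φ ⊆ Metric.closedBall 0 1) (M K : ℕ) {c : ℝ → Fin n → ℝ} {C η : ℝ}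
    (hC : 0 < C) (hη : 0 < η)
    (hc : ∀ ε, 0 < ε → ε ≤ η → (1 + ‖c ε‖) * ε ^ K ≤ C) :
    IsESNet (fun ε => concentrate φ (ε ^ M) (c ε)) := by
  refine ⟨fun ε hε => ⟨contDiff_concentrate hφ _ _, fun q l => ?_⟩, fun q l => ?_⟩
  · obtain ⟨D, -, hD⟩ := exists_mu_concentrate_le hφ hcomp hsupp q l
    exact (hD _ (pow_pos hε.1 M) (pow_le_one₀ hε.1.le hε.2) _).trans_lt ENNReal.ofReal_lt_top
  · obtain ⟨D, hD0, hD⟩ := exists_mu_concentrate_le hφ hcomp hsupp q l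
    refine ⟨M * (n + l) + K * q, D * C ^ q, by positivity, min 1 η, by positivity,
      fun ε hε hle => ?_⟩
    obtain ⟨hε1, hεη⟩ := le_min_iff.1 hle
    refine (hD _ (pow_pos hε M) (pow_le_one₀ hε.le hε1) _).trans (ENNReal.ofReal_le_ofReal ?_)
    have h1 : 1 + ‖c ε‖ ≤ C * (ε ^ K)⁻¹ := by
      rw [← div_eq_mul_inv, le_div_iff₀ (by positivity)]
      exact hc ε hε hεη
    calc D * ((ε ^ M) ^ (n + l))⁻¹ * (1 + ‖c ε‖) ^ q
        ≤ D * ((ε ^ M) ^ (n + l))⁻¹ * (C * (ε ^ K)⁻¹) ^ q := by gcongr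
      _ = _ := by
        simp only [zpow_neg, zpow_natCast]
        rw [pow_add ε, pow_mul ε, pow_mul ε, mul_pow, inv_pow, mul_inv]
        ring

/-- Integrating against `concentrate φ s c` approximates evaluation at `c`. -/
lemma norm_integral_mul_concentrate_sub_le (hφ : ContDiff ℝ ∞ φ) (hpos : ∀ y, 0 ≤ φ y)
    (hint : ∫ y, φ y = 1) (hsupp : tsupport φ ⊆ Metric.closedBall 0 1) {s : ℝ} (hs : 0 < s)
    {c : Fin n → ℝ} {g : (Fin n → ℝ) → ℂ} (hg : Continuous g) {L : ℝ}
    (hL : ∀ y, ‖y - c‖ ≤ s → ‖g y - g c‖ ≤ L) :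
    ‖(∫ y, g y * concentrate φ s c y) - g c‖ ≤ L := by
  have hcont : Continuous (concentrate φ s c) := (contDiff_concentrate hφ s c).continuous
  have hcs := hasCompactSupport_concentrate hsupp hs c
  have hmass : ∫ y, concentrate φ s c y = 1 := by
    simp only [concentrate]
    rw [integral_complex_ofReal, integral_concentrate_weight hint hs c, Complex.ofReal_one]
  have hnorm : ∀ y, ‖concentrate φ s c y‖ = (s ^ n)⁻¹ * φ (s⁻¹ • (y - c)) := fun y => by
    rw [concentrate, Complex.norm_of_nonneg (mul_nonneg (by positivity) (hpos _))]
  have hi : Integrable (concentrate φ s c) := hcont.integrable_of_hasCompactSupport hcs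
  have h1 : Integrable (fun y => g y * concentrate φ s c y) :=
    (hg.mul hcont).integrable_of_hasCompactSupport hcs.mul_left
  have heq : (∫ y, g y * concentrate φ s c y) - g c =
      ∫ y, (g y - g c) * concentrate φ s c y := by
    simp only [sub_mul]
    rw [integral_sub h1 (hi.const_mul _), integral_const_mul, hmass, mul_one]
  calc ‖(∫ y, g y * concentrate φ s c y) - g c‖
      ≤ ∫ y, L * ‖concentrate φ s c y‖ := by
        rw [heq]
        refine norm_integral_le_of_norm_le (hi.norm.const_mul L) (ae_of_all _ fun y => ?_)
        rw [norm_mul]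
        by_cases hy : ‖y - c‖ ≤ s
        · exact mul_le_mul_of_nonneg_right (hL y hy) (norm_nonneg _)
        · simp [concentrate_eq_zero hsupp hs (not_le.1 hy)]
    _ = L := by
        simp only [hnorm]
        rw [integral_const_mul, integral_concentrate_weight hint hs c, mul_one]

end Mollifier

section Kernel

variable {m n : ℕ} {H : ℝ → (Fin m → ℝ) × (Fin n → ℝ) → ℂ}

/-- At each `ε`, either the weighted bound by `ε ^ p` holds, or it fails at a point of
moderate size. -/
lemma exists_moderate_point_or_bound {E : Type*} [SeminormedAddCommGroup E] {g : E → ℂ}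
    {C ε : ℝ} {N p q : ℕ} (hε : 0 < ε) (hε1 : ε ≤ 1)
    (hg : ∀ z, ‖g z‖ * ε ^ N ≤ C * (1 + ‖z‖) ^ q) :
    ∃ z, (1 + ‖z‖) * ε ^ (N + p) ≤ max C 1 ∧
      ((∀ w, ‖g w‖ ≤ ε ^ p * (1 + ‖w‖) ^ (q + 1)) ∨ ε ^ p < ‖g z‖) := by
  by_cases hbad : ∀ w, ‖g w‖ ≤ ε ^ p * (1 + ‖w‖) ^ (q + 1)
  · refine ⟨0, ?_, Or.inl hbad⟩
    simpa using Or.inr (pow_le_one₀ hε.le hε1)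
  · push Not at hbad
    obtain ⟨z, hz⟩ := hbad
    have h1 : 1 ≤ 1 + ‖z‖ := by linarith [norm_nonneg z]
    refine ⟨z, le_max_of_le_left ?_, Or.inr (lt_of_le_of_lt ?_ hz)⟩
    · refine le_of_mul_le_mul_right ?_ (show 0 < (1 + ‖z‖) ^ q by positivity)
      calc (1 + ‖z‖) * ε ^ (N + p) * (1 + ‖z‖) ^ q
          = ε ^ p * (1 + ‖z‖) ^ (q + 1) * ε ^ N := by ring
        _ ≤ ‖g z‖ * ε ^ N := by gcongr
        _ ≤ _ := hg z
    · exact le_mul_of_one_le_right (by positivity) (one_le_pow₀ h1)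

/-- A gradient bound on `g` controls the oscillation of a slice `y ↦ g (x, y)`. -/
lemma norm_slice_sub_le {g : (Fin m → ℝ) × (Fin n → ℝ) → ℂ} (hg : ContDiff ℝ ∞ g) {B s : ℝ}
    {q : ℕ} (hB : 0 ≤ B) (hs1 : s ≤ 1) (hgB : ∀ z, ‖fderiv ℝ g z‖ ≤ B * (1 + ‖z‖) ^ q)
    (z : (Fin m → ℝ) × (Fin n → ℝ)) {y : Fin n → ℝ} (hy : ‖y - z.2‖ ≤ s) :
    ‖g (z.1, y) - g z‖ ≤ B * (2 ^ q * (1 + ‖z‖) ^ q) * s := by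
  have hdist : ‖(z.1, y) - z‖ = ‖y - z.2‖ := by simp [Prod.norm_def]
  have hs : 0 ≤ s := (norm_nonneg _).trans hy
  refine ((convex_closedBall z s).norm_image_sub_le_of_norm_fderiv_le (𝕜 := ℝ)
    (C := B * (2 ^ q * (1 + ‖z‖) ^ q)) (fun w _ => hg.differentiable (by simp) w)
    (fun w hw => (hgB w).trans ?_) (Metric.mem_closedBall_self hs) ?_).trans ?_
  · rw [Metric.mem_closedBall, dist_eq_norm] at hw
    gcongr
    exact one_add_norm_pow_le_of_dist_le_one (hw.trans hs1) q
  · rw [Metric.mem_closedBall, dist_eq_norm, hdist]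
    exact hy
  · rw [hdist]
    gcongr

/-- A moderate kernel inducing the null operator has negligible zeroth-order seminorms. -/
lemma exists_isOEps_zeroth_order (hH : IsEtauNet H)
    (hnull : ∀ f : ℝ → (Fin n → ℝ) → ℂ, IsESNet f →
      IsNtauNet (fun ε (x : Fin m → ℝ) => ∫ y : Fin n → ℝ, H ε (x, y) * f ε y)) :
    ∃ q : ℕ, ∀ p : ℕ, IsOEps (fun ε => mu (-(q : ℤ)) 0 (H ε)) (fun ε => ε ^ p) := by
  obtain ⟨q, N, hqN⟩ := hH.2 1
  rw [isOEps_mu_neg_iff _ _ _ _ (fun ε hε => by positivity)] at hqN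
  obtain ⟨C, hC, η, hη, hmod⟩ := hqN
  refine ⟨q + 1, fun p => ?_⟩
  rw [isOEps_mu_neg_iff _ _ _ _ (fun ε hε => by positivity)]
  have hpoint : ∀ ε, 0 < ε ∧ ε ≤ min 1 η → ∃ z, (1 + ‖z‖) * ε ^ (N + p) ≤ max C 1 ∧
      ((∀ w, ‖H ε w‖ ≤ ε ^ p * (1 + ‖w‖) ^ (q + 1)) ∨ ε ^ p < ‖H ε z‖) := by
    rintro ε ⟨hε, hle⟩
    obtain ⟨hε1, hεη⟩ := le_min_iff.1 hle
    refine exists_moderate_point_or_bound hε hε1 fun z => ?_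
    have := hmod ε hε hεη z 0 zero_le_one
    rw [norm_iteratedFDeriv_zero, zpow_neg, zpow_natCast] at this
    calc ‖H ε z‖ * ε ^ N ≤ C * (ε ^ N)⁻¹ * (1 + ‖z‖) ^ q * ε ^ N := by gcongr
      _ = _ := by field_simp
  choose! z hzmod hz using hpoint
  set C' := max C 1 with hC'
  have hC'0 : 0 < C' := lt_of_lt_of_le one_pos (le_max_right _ _)
  have hzpow : ∀ ε, 0 < ε → ε ≤ min 1 η → ∀ k : ℕ,
      (1 + ‖z ε‖) ^ k * ε ^ ((N + p) * k) ≤ C' ^ k := fun ε hε hle k => by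
    rw [pow_mul, ← mul_pow]
    exact pow_le_pow_left₀ (by positivity) (hzmod ε ⟨hε, hle⟩) k
  obtain ⟨φ, hφ, hφpos, hφint, hφcomp, hφsupp⟩ := exists_smooth_unit_mass n
  set M := N + (N + p) * q + (p + 1) with hM
  have hf : IsESNet (fun ε => concentrate φ (ε ^ M) (z ε).2) :=
    isESNet_concentrate hφ hφcomp hφsupp M (N + p) (η := min 1 η) hC'0 (by positivity)
      fun ε hε hle => (mul_le_mul_of_nonneg_right
        (add_le_add_right (norm_snd_le _) _) (by positivity)).trans (hzmod ε ⟨hε, hle⟩)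
  obtain ⟨q', hq'⟩ := (hnull _ hf).2 0
  have hneg := hq' ((N + p) * q' + (p + 1))
  rw [isOEps_mu_neg_iff _ _ _ _ (fun ε hε => by positivity)] at hneg
  obtain ⟨C₁, hC₁, η₁, hη₁, hneg⟩ := hneg
  set K := C * 2 ^ q * C' ^ q + C₁ * C' ^ q' with hK
  have hK0 : 0 < K := by positivity
  refine ⟨1, one_pos, min (min 1 η) (min η₁ K⁻¹), by positivity, fun ε hε hle w i hi => ?_⟩
  obtain ⟨hle1, hle2⟩ := le_min_iff.1 hle
  obtain ⟨hε1, hεη⟩ := le_min_iff.1 hle1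
  obtain ⟨hεη₁, hεK⟩ := le_min_iff.1 hle2
  obtain rfl : i = 0 := by omega
  rw [norm_iteratedFDeriv_zero, one_mul]
  refine (hz ε ⟨hε, hle1⟩).resolve_right (fun hlt => not_le.2 hlt ?_) w
  have hcd := (hH.1 ε ⟨hε, hε1⟩).1
  have hgrad : ∀ w, ‖fderiv ℝ (H ε) w‖ ≤ C * ε ^ (-(N : ℤ)) * (1 + ‖w‖) ^ q := fun w => by
    rw [← norm_iteratedFDeriv_one]
    exact hmod ε hε hεη w 1 le_rfl
  have herr := norm_integral_mul_concentrate_sub_le hφ hφpos hφint hφsupp (pow_pos hε M)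
    (c := (z ε).2) (g := fun y => H ε ((z ε).1, y)) (by have := hcd.continuous; fun_prop)
    (fun y hy => norm_slice_sub_le hcd (by positivity) (pow_le_one₀ hε.le hε1)
      hgrad (z ε) hy)
  have hval := hneg ε hε hεη₁ (z ε).1 0 le_rfl
  rw [norm_iteratedFDeriv_zero] at hval
  have herr' : C * ε ^ (-(N : ℤ)) * (2 ^ q * (1 + ‖z ε‖) ^ q) * ε ^ M ≤
      C * 2 ^ q * C' ^ q * ε ^ (p + 1) := by
    calc _ = C * 2 ^ q * ((1 + ‖z ε‖) ^ q * ε ^ ((N + p) * q)) * ε ^ (p + 1) := by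
          rw [zpow_neg, zpow_natCast, hM, pow_add _ (N + _), pow_add _ N]
          field_simp
      _ ≤ _ := by
          gcongr
          exact hzpow ε hε hle1 q
  have hval' : C₁ * ε ^ ((N + p) * q' + (p + 1)) * (1 + ‖(z ε).1‖) ^ q' ≤
      C₁ * C' ^ q' * ε ^ (p + 1) := by
    calc _ ≤ C₁ * ε ^ ((N + p) * q' + (p + 1)) * (1 + ‖z ε‖) ^ q' := by
          gcongr
          exact norm_fst_le _
      _ = C₁ * ((1 + ‖z ε‖) ^ q' * ε ^ ((N + p) * q')) * ε ^ (p + 1) := by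
          rw [pow_add]
          ring
      _ ≤ _ := by
          gcongr
          exact hzpow ε hε hle1 q'
  calc ‖H ε (z ε)‖ ≤ K * ε ^ (p + 1) := by
        have := norm_sub_norm_le (H ε (z ε))
          (∫ y, H ε ((z ε).1, y) * concentrate φ (ε ^ M) (z ε).2 y)
        rw [norm_sub_rev] at this
        rw [hK, add_mul]
        linarith
    _ = K * ε * ε ^ p := by ring
    _ ≤ 1 * ε ^ p := by
        gcongr
        rwa [mul_comm, ← le_div_iff₀ hK0, one_div]
    _ = ε ^ p := one_mul _

end Kernel

/-- injectivity of the map sending a tempered generalized kernel to the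
induced integral operator. -/
theorem stmt9 (m n : ℕ) (hm : 1 ≤ m) (hn : 1 ≤ n)
    (H : ℝ → ((Fin m → ℝ) × (Fin n → ℝ)) → ℂ) (hH : IsEtauNet H)
    (hnull : ∀ f : ℝ → (Fin n → ℝ) → ℂ, IsESNet f →
      IsNtauNet (fun ε (x : Fin m → ℝ) => ∫ y : Fin n → ℝ, H ε (x, y) * f ε y)) :
    IsNtauNet H := by
  obtain ⟨q, hq⟩ := exists_isOEps_zeroth_order hH hnull
  exact hH.isNtauNet_of_zeroth_order hq
end

section
/- Let m, n ≥ 1 and let (L_ε)_{ε∈(0,1]} be a moderate net of linear maps L_ε : 𝓢(ℝ^n) → C^∞(ℝ^m), each L_ε being continuous into O_M(ℝ^m). Let ψ be a mollifier on ℝ^n and φ a mollifier on ℝ^m, and for ε ∈ (0,1] and y ∈ ℝ^n let ψ_{ε,y} ∈ 𝓢(ℝ^n) be given by ψ_{ε,y}(v) = ψ_ε(y−v). Define H_ε : ℝ^{m+n} → ℂ by H_ε(x,y) = ∫_{ℝ^m} L_ε(ψ_{ε,y})(x−u) φ_ε(u) du. Then each H_ε is a well-defined smooth function of temperate growth on ℝ^{m+n},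 and the net (H_ε)_{ε∈(0,1]} belongs to E_τ(ℝ^{m+n}). -/
open MeasureTheory Filter

section Taylor

variable {E : Type*} [NormedAddCommGroup E] [NormedSpace ℝ E]
open scoped ContDiff

/-- The first order Taylor remainder `g (v + b) - g v - Dg(v) b`. -/
noncomputable def taylorRemainder {F : Type*} [NormedAddCommGroup F] [NormedSpace ℝ F]
    (b : E) (g : E → F) (v : E) : F :=
  g (v + b) - g v - fderiv ℝ g v b

theorem norm_taylorRemainder_le {F : Type*} [NormedAddCommGroup F] [NormedSpace ℝ F]
    {g : E → F} (hg : ContDiff ℝ ∞ g) (b v : E) {M : ℝ}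
    (hM : ∀ z, ‖z - v‖ ≤ ‖b‖ → ‖iteratedFDeriv ℝ 2 g z‖ ≤ M) :
    ‖taylorRemainder b g v‖ ≤ M * ‖b‖ ^ 2 := by
  have hd : Differentiable ℝ g := hg.differentiable (by simp)
  have hd' : Differentiable ℝ (fderiv ℝ g) :=
    (hg.fderiv_right (m := ∞) (by simp)).differentiable (by simp)
  have hM' : ∀ z ∈ Metric.closedBall v ‖b‖, ‖fderiv ℝ (fderiv ℝ g) z‖ ≤ M := by
    intro z hz
    have := hM z (by simpa [dist_eq_norm] using hz)
    rwa [← norm_iteratedFDeriv_fderiv, ← zero_add 1, ← norm_iteratedFDeriv_fderiv,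
      norm_iteratedFDeriv_zero] at this
  have hv : v ∈ Metric.closedBall v ‖b‖ := Metric.mem_closedBall_self (norm_nonneg _)
  have hvb : v + b ∈ Metric.closedBall v ‖b‖ := by simp
  have h1 : ∀ z ∈ Metric.closedBall v ‖b‖, ‖fderiv ℝ g z - fderiv ℝ g v‖ ≤ M * ‖b‖ := by
    intro z hz
    refine ((convex_closedBall v ‖b‖).norm_image_sub_le_of_norm_fderiv_le
      (fun x _ => hd' x) hM' hv hz).trans ?_
    have hM0 : 0 ≤ M := (norm_nonneg (fderiv ℝ (fderiv ℝ g) v)).trans (hM' v hv)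
    gcongr
    simpa [dist_eq_norm] using hz
  have h2 := (convex_closedBall v ‖b‖).norm_image_sub_le_of_norm_fderiv_le'
    (fun x _ => hd x) h1 hv hvb
  simpa [taylorRemainder, pow_two, mul_assoc] using h2

theorem fderiv_taylorRemainder {F : Type*} [NormedAddCommGroup F] [NormedSpace ℝ F]
    {g : E → F} (hg : ContDiff ℝ ∞ g) (b : E) :
    fderiv ℝ (taylorRemainder b g) = taylorRemainder b (fderiv ℝ g) := by
  have hd : Differentiable ℝ g := hg.differentiable (by simp)
  have hd' : Differentiable ℝ (fderiv ℝ g) :=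
    (hg.fderiv_right (m := ∞) (by simp)).differentiable (by simp)
  ext v c
  have hsymm : IsSymmSndFDerivAt ℝ g v := hg.contDiffAt.isSymmSndFDerivAt (by
    simpa using WithTop.coe_le_coe.2 (le_top : (2 : ℕ∞) ≤ ⊤))
  have h1 : HasFDerivAt (fun v => g (v + b)) (fderiv ℝ g (v + b)) v :=
    (hasFDerivAt_comp_add_right b).2 (hd (v + b)).hasFDerivAt
  have h2 : HasFDerivAt (fun v => fderiv ℝ g v b) ((fderiv ℝ (fderiv ℝ g) v).flip b) v :=
    by simpa using (hd' v).hasFDerivAt.clm_apply (hasFDerivAt_const b v)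
  have h3 : HasFDerivAt (taylorRemainder b g) _ v := (h1.sub (hd v).hasFDerivAt).sub h2
  rw [h3.fderiv]
  simp [taylorRemainder, hsymm.eq b c]

theorem norm_iteratedFDeriv_taylorRemainder_le {E F : Type} [NormedAddCommGroup E]
    [NormedSpace ℝ E] [NormedAddCommGroup F] [NormedSpace ℝ F]
    {g : E → F} (hg : ContDiff ℝ ∞ g) (b v : E) (i : ℕ) {M : ℝ}
    (hM : ∀ z, ‖z - v‖ ≤ ‖b‖ → ‖iteratedFDeriv ℝ (i + 2) g z‖ ≤ M) :
    ‖iteratedFDeriv ℝ i (taylorRemainder b g) v‖ ≤ M * ‖b‖ ^ 2 := by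
  induction i generalizing F with
  | zero => simpa using norm_taylorRemainder_le hg b v (by simpa using hM)
  | succ i ih =>
    rw [← norm_iteratedFDeriv_fderiv, fderiv_taylorRemainder hg]
    refine ih (hg.fderiv_right (by simp)) fun z hz => ?_
    rw [norm_iteratedFDeriv_fderiv]
    exact hM z hz

end Taylor

section WeightedNorm

open scoped LineDeriv SchwartzMap ContDiff

variable {E : Type*} [NormedAddCommGroup E] [NormedSpace ℝ E]

/-- The real-valued version of `mu k l` on Schwartz functions. -/
noncomputable def weightedNorm (k l : ℕ) (f : 𝓢(E, ℂ)) : ℝ := (mu (k : ℤ) l f).toReal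

theorem mu_le_ofReal_iff {r : ℤ} {l : ℕ} {f : E → ℂ} {M : ℝ} (hM : 0 ≤ M) :
    mu r l f ≤ ENNReal.ofReal M ↔
      ∀ x, ∀ i ≤ l, (1 + ‖x‖) ^ r * ‖iteratedFDeriv ℝ i f x‖ ≤ M := by
  simp only [mu, iSup_le_iff, ENNReal.ofReal_le_ofReal_iff hM]

theorem mu_schwartz_ne_top (k l : ℕ) (f : 𝓢(E, ℂ)) : mu (k : ℤ) l f ≠ ⊤ := by
  refine ne_top_of_le_ne_top ENNReal.ofReal_ne_top ((mu_le_ofReal_iff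
    (M := 2 ^ k * (Finset.Iic (k, l)).sup (fun m => SchwartzMap.seminorm ℝ m.1 m.2) f)
    (by positivity)).2 fun x i hi => ?_)
  rw [zpow_natCast]
  exact SchwartzMap.one_add_le_sup_seminorm_apply (𝕜 := ℝ) (m := (k, l)) le_rfl hi f x

theorem ofReal_weightedNorm (k l : ℕ) (f : 𝓢(E, ℂ)) :
    ENNReal.ofReal (weightedNorm k l f) = mu (k : ℤ) l f :=
  ENNReal.ofReal_toReal (mu_schwartz_ne_top k l f)

theorem weightedNorm_nonneg (k l : ℕ) (f : 𝓢(E, ℂ)) : 0 ≤ weightedNorm k l f :=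
  ENNReal.toReal_nonneg

theorem weightedNorm_le_iff {k l : ℕ} {f : 𝓢(E, ℂ)} {M : ℝ} (hM : 0 ≤ M) :
    weightedNorm k l f ≤ M ↔
      ∀ x, ∀ i ≤ l, (1 + ‖x‖) ^ k * ‖iteratedFDeriv ℝ i f x‖ ≤ M := by
  rw [← ENNReal.ofReal_le_ofReal_iff hM, ofReal_weightedNorm, mu_le_ofReal_iff hM]
  simp only [zpow_natCast]

theorem le_weightedNorm {k l i : ℕ} (hi : i ≤ l) (f : 𝓢(E, ℂ)) (x : E) :
    (1 + ‖x‖) ^ k * ‖iteratedFDeriv ℝ i f x‖ ≤ weightedNorm k l f :=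
  (weightedNorm_le_iff (weightedNorm_nonneg k l f)).1 le_rfl x i hi

theorem weightedNorm_mono {k l l' : ℕ} (h : l ≤ l') (f : 𝓢(E, ℂ)) :
    weightedNorm k l f ≤ weightedNorm k l' f :=
  (weightedNorm_le_iff (weightedNorm_nonneg _ _ _)).2 fun x _ hi =>
    le_weightedNorm (hi.trans h) f x

theorem weightedNorm_lineDerivOp_le (k l : ℕ) (b : E) (f : 𝓢(E, ℂ)) :
    weightedNorm k l (∂_{b} f) ≤ ‖b‖ * weightedNorm k (l + 1) f := by
  refine (weightedNorm_le_iff (mul_nonneg (norm_nonneg _) (weightedNorm_nonneg _ _ _))).2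
    fun x i hi => ?_
  have hf : ContDiff ℝ ∞ f := f.smooth ⊤
  have h : ‖iteratedFDeriv ℝ i (∂_{b} f : 𝓢(E, ℂ)) x‖ ≤ ‖iteratedFDeriv ℝ (i + 1) f x‖ * ‖b‖ := by
    have heq : ⇑(∂_{b} f : 𝓢(E, ℂ)) = fun y => fderiv ℝ f y b := by
      ext y; exact SchwartzMap.lineDerivOp_apply_eq_fderiv b f y
    rw [heq, ← norm_iteratedFDeriv_fderiv]
    refine ContinuousMultilinearMap.opNorm_le_bound (by positivity) fun w => ?_
    rw [iteratedFDeriv_clm_apply_const_apply (hf.fderiv_right (m := ∞) (by simp)) (mod_cast le_top)]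
    refine (ContinuousLinearMap.le_opNorm _ _).trans ?_
    have := ContinuousMultilinearMap.le_opNorm (iteratedFDeriv ℝ i (fderiv ℝ f) x) w
    calc _ ≤ (‖iteratedFDeriv ℝ i (fderiv ℝ f) x‖ * ∏ j, ‖w j‖) * ‖b‖ := by gcongr
      _ = _ := by ring
  calc _ ≤ (1 + ‖x‖) ^ k * (‖iteratedFDeriv ℝ (i + 1) f x‖ * ‖b‖) := by gcongr
    _ = ‖b‖ * ((1 + ‖x‖) ^ k * ‖iteratedFDeriv ℝ (i + 1) f x‖) := by ring
    _ ≤ _ := by gcongr; exact le_weightedNorm (by omega) f x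

/-- The Schwartz function `v ↦ f (y - v)`, linearly in `f`. -/
noncomputable def reflectTranslate (y : E) : 𝓢(E, ℂ) →L[ℝ] 𝓢(E, ℂ) :=
  SchwartzMap.compCLMOfAntilipschitz (g := fun v => y - v) (K := 1) ℝ (by fun_prop)
    (fun _ _ => by simp [edist_dist, dist_eq_norm, norm_sub_rev])

@[simp]
theorem reflectTranslate_apply (y : E) (f : 𝓢(E, ℂ)) (v : E) :
    reflectTranslate y f v = f (y - v) := rfl

theorem norm_iteratedFDeriv_comp_const_sub {F : Type*} [NormedAddCommGroup F] [NormedSpace ℝ F]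
    (i : ℕ) (f : E → F) (y v : E) :
    ‖iteratedFDeriv ℝ i (fun v => f (y - v)) v‖ = ‖iteratedFDeriv ℝ i f (y - v)‖ := by
  have h := (LinearIsometryEquiv.neg ℝ (E := E)).norm_iteratedFDeriv_comp_right
    (fun v => f (v + y)) v i
  rw [iteratedFDeriv_comp_add_right] at h
  simpa [Function.comp_def, neg_add_eq_sub] using h

theorem one_add_norm_le_mul {E : Type*} [SeminormedAddCommGroup E] (v z : E) :
    1 + ‖v‖ ≤ (1 + ‖z - v‖) * (1 + ‖z‖) := by
  have h : ‖v‖ ≤ ‖z - v‖ + ‖z‖ := by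
    simpa [norm_sub_rev] using norm_le_norm_sub_add v z
  nlinarith [norm_nonneg (z - v), norm_nonneg z]

theorem weightedNorm_reflectTranslate_le (k l : ℕ) (y : E) (f : 𝓢(E, ℂ)) :
    weightedNorm k l (reflectTranslate y f) ≤ (1 + ‖y‖) ^ k * weightedNorm k l f := by
  refine (weightedNorm_le_iff (mul_nonneg (by positivity) (weightedNorm_nonneg _ _ _))).2
    fun v i hi => ?_
  have h : ‖iteratedFDeriv ℝ i (reflectTranslate y f) v‖ = ‖iteratedFDeriv ℝ i f (y - v)‖ :=
    norm_iteratedFDeriv_comp_const_sub i f y v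
  have h2 : 1 + ‖v‖ ≤ (1 + ‖y‖) * (1 + ‖y - v‖) := by
    rw [mul_comm]; exact one_add_norm_le_mul v y
  rw [h]
  calc _ ≤ ((1 + ‖y‖) * (1 + ‖y - v‖)) ^ k * ‖iteratedFDeriv ℝ i f (y - v)‖ := by gcongr
    _ = (1 + ‖y‖) ^ k * ((1 + ‖y - v‖) ^ k * ‖iteratedFDeriv ℝ i f (y - v)‖) := by
      rw [mul_pow, mul_assoc]
    _ ≤ _ := by gcongr; exact le_weightedNorm hi f _

theorem weightedNorm_reflectTranslate_taylor_le {E : Type} [NormedAddCommGroup E]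
    [NormedSpace ℝ E] (k l : ℕ) (y b : E) (f : 𝓢(E, ℂ)) :
    weightedNorm k l (reflectTranslate (y + b) f - reflectTranslate y f -
        reflectTranslate y (∂_{b} f)) ≤
      (1 + ‖y‖) ^ k * (1 + ‖b‖) ^ k * weightedNorm k (l + 2) f * ‖b‖ ^ 2 := by
  have hW := weightedNorm_nonneg k (l + 2) f
  refine (weightedNorm_le_iff (by positivity)).2 fun v i hi => ?_
  have heq : ⇑(reflectTranslate (y + b) f - reflectTranslate y f -
      reflectTranslate y (∂_{b} f)) = fun v => taylorRemainder b f (y - v) := by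
    ext v
    simp [taylorRemainder, SchwartzMap.lineDerivOp_apply_eq_fderiv, sub_add_eq_add_sub]
  rw [heq, norm_iteratedFDeriv_comp_const_sub]
  have hpos : (0 : ℝ) < (1 + ‖v‖) ^ k := by positivity
  have := norm_iteratedFDeriv_taylorRemainder_le (f.smooth ⊤) b (y - v) i
    (M := (1 + ‖y‖) ^ k * (1 + ‖b‖) ^ k * weightedNorm k (l + 2) f / (1 + ‖v‖) ^ k) ?_
  · rw [mul_comm, ← le_div_iff₀ hpos]
    exact this.trans_eq (by ring)
  · intro z hz
    rw [le_div_iff₀ hpos, mul_comm]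
    have h1 := one_add_norm_le_mul v y
    have h2 : 1 + ‖y - v‖ ≤ (1 + ‖b‖) * (1 + ‖z‖) :=
      (one_add_norm_le_mul (y - v) z).trans (by gcongr)
    have h3 : 1 + ‖v‖ ≤ (1 + ‖y‖) * (1 + ‖b‖) * (1 + ‖z‖) := by
      calc _ ≤ _ := h1
        _ ≤ (1 + ‖b‖) * (1 + ‖z‖) * (1 + ‖y‖) := by gcongr
        _ = _ := by ring
    calc _ ≤ ((1 + ‖y‖) * (1 + ‖b‖) * (1 + ‖z‖)) ^ k * ‖iteratedFDeriv ℝ (i + 2) f z‖ := by gcongr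
      _ = (1 + ‖y‖) ^ k * (1 + ‖b‖) ^ k *
          ((1 + ‖z‖) ^ k * ‖iteratedFDeriv ℝ (i + 2) f z‖) := by
        rw [mul_pow, mul_pow, mul_assoc]
      _ ≤ _ := by gcongr; exact le_weightedNorm (by omega) f z

end WeightedNorm

section TranslatedForm

open scoped LineDeriv SchwartzMap ContDiff

theorem norm_iteratedFDeriv_le_of_clm_apply {D E F : Type*} [NormedAddCommGroup D]
    [NormedSpace ℝ D] [NormedAddCommGroup E] [NormedSpace ℝ E] [NormedAddCommGroup F]
    [NormedSpace ℝ F] {f : D → E →L[ℝ] F} (hf : ContDiff ℝ ∞ f) (i : ℕ) (x : D) {M : ℝ}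
    (hM : 0 ≤ M) (h : ∀ c, ‖iteratedFDeriv ℝ i (fun y => f y c) x‖ ≤ M * ‖c‖) :
    ‖iteratedFDeriv ℝ i f x‖ ≤ M := by
  refine ContinuousMultilinearMap.opNorm_le_bound hM fun w => ?_
  refine ContinuousLinearMap.opNorm_le_bound _ (by positivity) fun c => ?_
  rw [← iteratedFDeriv_clm_apply_const_apply hf (mod_cast le_top)]
  refine (ContinuousMultilinearMap.le_opNorm _ w).trans ?_
  calc _ ≤ M * ‖c‖ * ∏ j, ‖w j‖ := by gcongr; exact h c
    _ = _ := by ring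

variable {E₁ E₂ : Type} [NormedAddCommGroup E₁] [NormedSpace ℝ E₁]
  [NormedAddCommGroup E₂] [NormedSpace ℝ E₂]

/-- The function `(x, y) ↦ B (g (y - ·)) (h (x - ·))`. -/
noncomputable def translatedForm (B : 𝓢(E₂, ℂ) →ₗ[ℝ] 𝓢(E₁, ℂ) →ₗ[ℝ] ℂ)
    (g : 𝓢(E₂, ℂ)) (h : 𝓢(E₁, ℂ)) (z : E₁ × E₂) : ℂ :=
  B (reflectTranslate z.2 g) (reflectTranslate z.1 h)

/-- The derivative of `translatedForm` at `z`, as a linear map. -/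
noncomputable def translatedFormDeriv (B : 𝓢(E₂, ℂ) →ₗ[ℝ] 𝓢(E₁, ℂ) →ₗ[ℝ] ℂ)
    (g : 𝓢(E₂, ℂ)) (h : 𝓢(E₁, ℂ)) (z : E₁ × E₂) : E₁ × E₂ →ₗ[ℝ] ℂ where
  toFun c := translatedForm B (∂_{c.2} g) h z + translatedForm B g (∂_{c.1} h) z
  map_add' c d := by
    simp only [translatedForm, Prod.fst_add, Prod.snd_add, LineDeriv.lineDerivOp_left_add, map_add,
      LinearMap.add_apply]
    ring
  map_smul' r c := by
    simp only [translatedForm, Prod.smul_fst, Prod.smul_snd, LineDeriv.lineDerivOp_left_smul, map_smul,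
      LinearMap.smul_apply, smul_add, RingHom.id_apply]

variable [FiniteDimensional ℝ E₁] [FiniteDimensional ℝ E₂]
  {B : 𝓢(E₂, ℂ) →ₗ[ℝ] 𝓢(E₁, ℂ) →ₗ[ℝ] ℂ} {C : ℝ} {k l k' l' : ℕ}

theorem hasFDerivAt_translatedForm (hC : 0 ≤ C)
    (hB : ∀ f h, ‖B f h‖ ≤ C * weightedNorm k l f * weightedNorm k' l' h)
    (g : 𝓢(E₂, ℂ)) (h : 𝓢(E₁, ℂ)) (z : E₁ × E₂) :
    HasFDerivAt (translatedForm B g h)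
      (LinearMap.toContinuousLinearMap (translatedFormDeriv B g h z)) z := by
  obtain ⟨x, y⟩ := z
  rw [hasFDerivAt_iff_isLittleO_nhds_zero]
  refine Asymptotics.IsBigO.trans_isLittleO (g := fun c : E₁ × E₂ => ‖c‖ ^ 2) ?_
    (Asymptotics.isLittleO_norm_pow_id one_lt_two)
  set G₀ := weightedNorm k l (reflectTranslate y g)
  set G₁ := (1 + ‖y‖) ^ k * weightedNorm k (l + 1) g
  set G₂ := (1 + ‖y‖) ^ k * 2 ^ k * weightedNorm k (l + 2) g
  set H₀ := (2 + ‖x‖) ^ k' * weightedNorm k' l' h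
  set H₁ := (1 + ‖x‖) ^ k' * weightedNorm k' (l' + 1) h
  set H₂ := (1 + ‖x‖) ^ k' * 2 ^ k' * weightedNorm k' (l' + 2) h
  have hG₀ : 0 ≤ G₀ := weightedNorm_nonneg _ _ _
  have hG₁ : 0 ≤ G₁ := mul_nonneg (by positivity) (weightedNorm_nonneg _ _ _)
  have hG₂ : 0 ≤ G₂ := mul_nonneg (by positivity) (weightedNorm_nonneg _ _ _)
  have hH₁ : 0 ≤ H₁ := mul_nonneg (by positivity) (weightedNorm_nonneg _ _ _)
  have hH₂ : 0 ≤ H₂ := mul_nonneg (by positivity) (weightedNorm_nonneg _ _ _)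
  refine Asymptotics.IsBigO.of_bound (C * G₂ * H₀ + C * G₀ * H₂ + C * G₁ * H₂ + C * G₁ * H₁) ?_
  filter_upwards [Metric.ball_mem_nhds (0 : E₁ × E₂) one_pos] with c hc
  obtain ⟨a, b⟩ := c
  set t := ‖((a, b) : E₁ × E₂)‖
  have ht : t ≤ 1 := (mem_ball_zero_iff.1 hc).le
  have ht0 : 0 ≤ t := norm_nonneg _
  have ha : ‖a‖ ≤ t := norm_fst_le (a, b)
  have hb : ‖b‖ ≤ t := norm_snd_le (a, b)
  set rg := reflectTranslate (y + b) g - reflectTranslate y g - reflectTranslate y (∂_{b} g)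
    with hrg
  set rh := reflectTranslate (x + a) h - reflectTranslate x h - reflectTranslate x (∂_{a} h)
    with hrh
  have key : translatedForm B g h ((x, y) + (a, b)) - translatedForm B g h (x, y) -
      LinearMap.toContinuousLinearMap (translatedFormDeriv B g h (x, y)) (a, b) =
      B rg (reflectTranslate (x + a) h) + B (reflectTranslate y g) rh +
        B (reflectTranslate y (∂_{b} g)) rh +
        B (reflectTranslate y (∂_{b} g)) (reflectTranslate x (∂_{a} h)) := by
    simp only [translatedForm, translatedFormDeriv, LinearMap.coe_toContinuousLinearMap',
      LinearMap.coe_mk, AddHom.coe_mk, Prod.mk_add_mk, hrg, hrh, map_sub, LinearMap.sub_apply]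
    ring
  have erg : weightedNorm k l rg ≤ G₂ * t ^ 2 := by
    have hW := weightedNorm_nonneg k (l + 2) g
    refine (weightedNorm_reflectTranslate_taylor_le k l y b g).trans ?_
    simp only [G₂]
    gcongr
    linarith
  have erh : weightedNorm k' l' rh ≤ H₂ * t ^ 2 := by
    have hW := weightedNorm_nonneg k' (l' + 2) h
    refine (weightedNorm_reflectTranslate_taylor_le k' l' x a h).trans ?_
    simp only [H₂]
    gcongr
    linarith
  have eg : weightedNorm k l (reflectTranslate y (∂_{b} g)) ≤ G₁ * t := by
    have hW := weightedNorm_nonneg k (l + 1) g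
    calc _ ≤ (1 + ‖y‖) ^ k * (‖b‖ * weightedNorm k (l + 1) g) :=
          (weightedNorm_reflectTranslate_le k l y _).trans
            (by gcongr; exact weightedNorm_lineDerivOp_le k l b g)
      _ ≤ (1 + ‖y‖) ^ k * (t * weightedNorm k (l + 1) g) := by gcongr
      _ = G₁ * t := by simp only [G₁]; ring
  have eh : weightedNorm k' l' (reflectTranslate x (∂_{a} h)) ≤ H₁ * t := by
    have hW := weightedNorm_nonneg k' (l' + 1) h
    calc _ ≤ (1 + ‖x‖) ^ k' * (‖a‖ * weightedNorm k' (l' + 1) h) :=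
          (weightedNorm_reflectTranslate_le k' l' x _).trans
            (by gcongr; exact weightedNorm_lineDerivOp_le k' l' a h)
      _ ≤ (1 + ‖x‖) ^ k' * (t * weightedNorm k' (l' + 1) h) := by gcongr
      _ = H₁ * t := by simp only [H₁]; ring
  have eh0 : weightedNorm k' l' (reflectTranslate (x + a) h) ≤ H₀ := by
    have hW := weightedNorm_nonneg k' l' h
    refine (weightedNorm_reflectTranslate_le k' l' (x + a) h).trans ?_
    have hxa : 1 + ‖x + a‖ ≤ 2 + ‖x‖ := by linarith [norm_add_le x a]
    simp only [H₀]
    gcongr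
  have bound : ∀ f u X Y, weightedNorm k l f ≤ X → weightedNorm k' l' u ≤ Y →
      ‖B f u‖ ≤ C * X * Y := fun f u X Y hX hY => by
    have h1 := weightedNorm_nonneg k' l' u
    have h2 := (weightedNorm_nonneg k l f).trans hX
    exact (hB f u).trans (by gcongr)
  rw [key, Real.norm_of_nonneg (by positivity)]
  refine (norm_add_le _ _).trans ?_
  refine (add_le_add ((norm_add_le _ _).trans (add_le_add (norm_add_le _ _) le_rfl)) le_rfl).trans ?_
  have b1 := bound _ _ _ _ erg eh0
  have b2 := bound (reflectTranslate y g) _ G₀ _ le_rfl erh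
  have b3 := bound _ _ _ _ eg erh
  have b4 := bound _ _ _ _ eg eh
  have b3' : C * (G₁ * t) * (H₂ * t ^ 2) ≤ C * G₁ * H₂ * t ^ 2 := by
    calc _ = C * G₁ * H₂ * t ^ 2 * t := by ring
      _ ≤ C * G₁ * H₂ * t ^ 2 * 1 := by gcongr
      _ = _ := by ring
  calc _ ≤ C * (G₂ * t ^ 2) * H₀ + C * G₀ * (H₂ * t ^ 2) + C * G₁ * H₂ * t ^ 2 +
        C * (G₁ * t) * (H₁ * t) := by linarith
    _ = _ := by ring

theorem fderiv_translatedForm_apply (hC : 0 ≤ C)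
    (hB : ∀ f h, ‖B f h‖ ≤ C * weightedNorm k l f * weightedNorm k' l' h)
    (g : 𝓢(E₂, ℂ)) (h : 𝓢(E₁, ℂ)) (z c : E₁ × E₂) :
    fderiv ℝ (translatedForm B g h) z c =
      translatedForm B (∂_{c.2} g) h z + translatedForm B g (∂_{c.1} h) z := by
  rw [(hasFDerivAt_translatedForm hC hB g h z).fderiv]
  rfl

theorem contDiff_translatedForm (hC : 0 ≤ C)
    (hB : ∀ f h, ‖B f h‖ ≤ C * weightedNorm k l f * weightedNorm k' l' h)
    (g : 𝓢(E₂, ℂ)) (h : 𝓢(E₁, ℂ)) : ContDiff ℝ ∞ (translatedForm B g h) := by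
  refine contDiff_infty.2 fun i => ?_
  induction i generalizing g h with
  | zero =>
    exact contDiff_zero.2 (continuous_iff_continuousAt.2 fun z =>
      (hasFDerivAt_translatedForm hC hB g h z).continuousAt)
  | succ i ih =>
    exact contDiff_succ_iff_hasFDerivAt.2 ⟨_, contDiff_clm_apply_iff.2 fun c =>
      (ih (∂_{c.2} g) h).add (ih g (∂_{c.1} h)), hasFDerivAt_translatedForm hC hB g h⟩

theorem norm_iteratedFDeriv_translatedForm_le (hC : 0 ≤ C)
    (hB : ∀ f h, ‖B f h‖ ≤ C * weightedNorm k l f * weightedNorm k' l' h)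
    (g : 𝓢(E₂, ℂ)) (h : 𝓢(E₁, ℂ)) (i : ℕ) (z : E₁ × E₂) :
    ‖iteratedFDeriv ℝ i (translatedForm B g h) z‖ ≤
      2 ^ i * C * (1 + ‖z‖) ^ (k + k') * weightedNorm k (l + i) g *
        weightedNorm k' (l' + i) h := by
  induction i generalizing g h with
  | zero =>
    have h1 := weightedNorm_nonneg k l g
    have h2 := weightedNorm_nonneg k' l' h
    have h3 := weightedNorm_nonneg k' l' (reflectTranslate z.1 h)
    rw [norm_iteratedFDeriv_zero]
    calc _ ≤ _ := hB _ _
      _ ≤ C * ((1 + ‖z.2‖) ^ k * weightedNorm k l g) *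
          ((1 + ‖z.1‖) ^ k' * weightedNorm k' l' h) := by
        gcongr <;> exact weightedNorm_reflectTranslate_le _ _ _ _
      _ ≤ C * ((1 + ‖z‖) ^ k * weightedNorm k l g) *
          ((1 + ‖z‖) ^ k' * weightedNorm k' l' h) := by
        gcongr
        exacts [norm_snd_le z, norm_fst_le z]
      _ = _ := by rw [pow_add, add_zero, add_zero]; ring
  | succ i ih =>
    have hg := weightedNorm_nonneg k (l + (i + 1)) g
    have hh := weightedNorm_nonneg k' (l' + (i + 1)) h
    have hsm := contDiff_translatedForm hC hB
    rw [← norm_iteratedFDeriv_fderiv]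
    refine norm_iteratedFDeriv_le_of_clm_apply ((hsm g h).fderiv_right (by simp)) i z
      (by positivity) fun c => ?_
    simp only [fderiv_translatedForm_apply hC hB]
    have hadd : (fun y => translatedForm B (∂_{c.2} g) h y + translatedForm B g (∂_{c.1} h) y) =
      translatedForm B (∂_{c.2} g) h + translatedForm B g (∂_{c.1} h) := rfl
    rw [hadd, iteratedFDeriv_add_apply ((hsm _ _).contDiffAt.of_le (mod_cast le_top))
      ((hsm _ _).contDiffAt.of_le (mod_cast le_top))]
    have e1 : weightedNorm k (l + i) (∂_{c.2} g) ≤ ‖c‖ * weightedNorm k (l + (i + 1)) g :=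
      (weightedNorm_lineDerivOp_le k (l + i) c.2 g).trans 
        (mul_le_mul_of_nonneg_right (norm_snd_le c) hg)
    have e2 : weightedNorm k' (l' + i) (∂_{c.1} h) ≤ ‖c‖ * weightedNorm k' (l' + (i + 1)) h :=
      (weightedNorm_lineDerivOp_le k' (l' + i) c.1 h).trans 
        (mul_le_mul_of_nonneg_right (norm_fst_le c) hh)
    have e3 : weightedNorm k (l + i) g ≤ weightedNorm k (l + (i + 1)) g :=
      weightedNorm_mono (by omega) g
    have e4 : weightedNorm k' (l' + i) h ≤ weightedNorm k' (l' + (i + 1)) h :=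
      weightedNorm_mono (by omega) h
    have p1 := weightedNorm_nonneg k' (l' + i) h
    have p2 := weightedNorm_nonneg k' (l' + i) (∂_{c.1} h)
    calc _ ≤ _ := norm_add_le _ _
      _ ≤ _ := add_le_add (ih (∂_{c.2} g) h) (ih g (∂_{c.1} h))
      _ ≤ 2 ^ i * C * (1 + ‖z‖) ^ (k + k') * (‖c‖ * weightedNorm k (l + (i + 1)) g) *
            weightedNorm k' (l' + (i + 1)) h +
          2 ^ i * C * (1 + ‖z‖) ^ (k + k') * weightedNorm k (l + (i + 1)) g *
            (‖c‖ * weightedNorm k' (l' + (i + 1)) h) := by gcongr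
      _ = _ := by ring

end TranslatedForm

section Kernel

open scoped LineDeriv SchwartzMap ContDiff

theorem exists_schwartzMap_eq_scaled {d : ℕ} (ρ : 𝓢(Fin d → ℝ, ℂ)) {ε : ℝ} (h0 : 0 < ε)
    (h1 : ε ≤ 1) :
    ∃ S : 𝓢(Fin d → ℝ, ℂ), ⇑S = scaled ρ ε ∧
      ∀ k l, weightedNorm k l S ≤ ε ^ (-((d + l : ℕ) : ℤ)) * weightedNorm k l ρ := by
  have hanti : AntilipschitzWith ⟨ε, h0.le⟩ (fun x : Fin d → ℝ => ε⁻¹ • x) :=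
    AntilipschitzWith.of_le_mul_dist fun x y => by
      rw [dist_smul₀, Real.norm_of_nonneg (by positivity)]
      change dist x y ≤ ε * (ε⁻¹ * dist x y)
      rw [mul_inv_cancel_left₀ h0.ne']
  let S : 𝓢(Fin d → ℝ, ℂ) :=
    (ε ^ (-(d : ℤ)) : ℝ) • SchwartzMap.compCLMOfAntilipschitz ℝ (by fun_prop) hanti ρ
  refine ⟨S, funext fun _ => Complex.real_smul, fun k l => ?_⟩
  have hW := weightedNorm_nonneg k l ρ
  refine (weightedNorm_le_iff (by positivity)).2 fun x i hi => ?_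
  have hρ : ContDiff ℝ i ρ := ρ.smooth i
  have hS : iteratedFDeriv ℝ i S x =
      (ε ^ (-(d : ℤ)) : ℝ) • (ε⁻¹ ^ i • iteratedFDeriv ℝ i ρ (ε⁻¹ • x)) := by
    have hfun : ⇑S = fun x => (ε ^ (-(d : ℤ)) : ℝ) • ρ (ε⁻¹ • x) := rfl
    rw [hfun, iteratedFDeriv_const_smul_apply' (by fun_prop),
      iteratedFDeriv_comp_const_smul _ hρ]
  have hx : ‖x‖ ≤ ‖ε⁻¹ • x‖ := by
    rw [norm_smul, Real.norm_of_nonneg (by positivity)]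
    exact le_mul_of_one_le_left (norm_nonneg _) ((one_le_inv₀ h0).2 h1)
  have hε : ε ^ (-(d : ℤ)) * ε⁻¹ ^ i ≤ ε ^ (-((d + l : ℕ) : ℤ)) := by
    rw [zpow_neg, zpow_neg, zpow_natCast, zpow_natCast, ← inv_pow, ← inv_pow, ← pow_add]
    exact pow_le_pow_right₀ ((one_le_inv₀ h0).2 h1) (by omega)
  rw [hS, norm_smul, norm_smul, Real.norm_of_nonneg (by positivity),
    Real.norm_of_nonneg (by positivity)]
  calc _ ≤ (1 + ‖ε⁻¹ • x‖) ^ k *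
        (ε ^ (-(d : ℤ)) * (ε⁻¹ ^ i * ‖iteratedFDeriv ℝ i ρ (ε⁻¹ • x)‖)) := by gcongr
    _ = (ε ^ (-(d : ℤ)) * ε⁻¹ ^ i) *
        ((1 + ‖ε⁻¹ • x‖) ^ k * ‖iteratedFDeriv ℝ i ρ (ε⁻¹ • x)‖) := by ring
    _ ≤ _ := by gcongr; exact le_weightedNorm hi ρ _

/-- The integral of `(1 + |u|)^(-(m+1))` over `ℝ^m`. -/
noncomputable def decayIntegral (m : ℕ) : ℝ :=
  ∫ u : Fin m → ℝ, (1 + ‖u‖) ^ (-((m : ℝ) + 1))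

theorem decayIntegral_nonneg (m : ℕ) : 0 ≤ decayIntegral m :=
  integral_nonneg fun _ => by positivity

theorem integrable_decay (m : ℕ) :
    Integrable (fun u : Fin m → ℝ => (1 + ‖u‖) ^ (-((m : ℝ) + 1))) :=
  integrable_one_add_norm (by simp)

variable {m n : ℕ} {A : 𝓢(Fin n → ℝ, ℂ) →ₗ[ℂ] ((Fin m → ℝ) → ℂ)} {C : ℝ} {p q l : ℕ}

theorem norm_apply_mul_le (hC : 0 ≤ C)
    (hA : ∀ f u, ‖A f u‖ ≤ C * (1 + ‖u‖) ^ p * weightedNorm q l f)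
    (f : 𝓢(Fin n → ℝ, ℂ)) (h : 𝓢(Fin m → ℝ, ℂ)) (u : Fin m → ℝ) :
    ‖A f u * h u‖ ≤ C * weightedNorm q l f * weightedNorm (p + (m + 1)) 0 h *
      (1 + ‖u‖) ^ (-((m : ℝ) + 1)) := by
  have hf := weightedNorm_nonneg q l f
  have hpos : (0 : ℝ) < (1 + ‖u‖) ^ (m + 1) := by positivity
  have hr : (1 + ‖u‖) ^ (-((m : ℝ) + 1)) = ((1 + ‖u‖) ^ (m + 1))⁻¹ := by
    rw [Real.rpow_neg (by positivity)]
    exact_mod_cast congrArg _ (Real.rpow_natCast (1 + ‖u‖) (m + 1))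
  have hh := le_weightedNorm (k := p + (m + 1)) (le_refl 0) h u
  rw [norm_iteratedFDeriv_zero, pow_add] at hh
  rw [hr, ← div_eq_mul_inv, le_div_iff₀ hpos, norm_mul]
  calc _ ≤ (C * (1 + ‖u‖) ^ p * weightedNorm q l f) * ‖h u‖ * (1 + ‖u‖) ^ (m + 1) := by
        gcongr; exact hA f u
    _ = C * weightedNorm q l f * ((1 + ‖u‖) ^ p * (1 + ‖u‖) ^ (m + 1) * ‖h u‖) := by ring
    _ ≤ _ := by gcongr

theorem integrable_apply_mul (hC : 0 ≤ C) (hcont : ∀ f, Continuous (A f))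
    (hA : ∀ f u, ‖A f u‖ ≤ C * (1 + ‖u‖) ^ p * weightedNorm q l f)
    (f : 𝓢(Fin n → ℝ, ℂ)) (h : 𝓢(Fin m → ℝ, ℂ)) :
    Integrable (fun u => A f u * h u) :=
  ((integrable_decay m).const_mul _).mono'
    ((hcont f).mul h.continuous).aestronglyMeasurable
    (Eventually.of_forall (norm_apply_mul_le hC hA f h))

theorem exists_pairing (hC : 0 ≤ C) (hcont : ∀ f, Continuous (A f))
    (hA : ∀ f u, ‖A f u‖ ≤ C * (1 + ‖u‖) ^ p * weightedNorm q l f) :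
    ∃ B : 𝓢(Fin n → ℝ, ℂ) →ₗ[ℝ] 𝓢(Fin m → ℝ, ℂ) →ₗ[ℝ] ℂ,
      (∀ f h, B f h = ∫ u, A f u * h u) ∧
      ∀ f h, ‖B f h‖ ≤ C * decayIntegral m * weightedNorm q l f *
        weightedNorm (p + (m + 1)) 0 h := by
  have hint := integrable_apply_mul hC hcont hA
  have hsmul : ∀ (r : ℝ) (f : 𝓢(Fin n → ℝ, ℂ)), A (r • f) = (r : ℂ) • A f := fun r f => by
    rw [← map_smul]; congr 1
  refine ⟨LinearMap.mk₂ ℝ (fun f h => ∫ u, A f u * h u) ?_ ?_ ?_ ?_, fun f h => rfl, fun f h => ?_⟩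
  · intro f g h
    rw [← integral_add (hint f h) (hint g h)]
    simp [add_mul]
  · intro r f h
    rw [← integral_smul]
    simp [hsmul, mul_assoc]
  · intro f h g
    rw [← integral_add (hint f h) (hint f g)]
    simp [mul_add]
  · intro r f h
    rw [← integral_smul]
    simp [mul_left_comm]
  · change ‖∫ u, A f u * h u‖ ≤ _
    refine (norm_integral_le_of_norm_le ((integrable_decay m).const_mul _)
      (Eventually.of_forall (norm_apply_mul_le hC hA f h))).trans_eq ?_
    rw [integral_const_mul, decayIntegral]
    ring

theorem integrable_apply_sub_mul (hC : 0 ≤ C) (hcont : ∀ f, Continuous (A f))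
    (hA : ∀ f u, ‖A f u‖ ≤ C * (1 + ‖u‖) ^ p * weightedNorm q l f)
    (f : 𝓢(Fin n → ℝ, ℂ)) (h : 𝓢(Fin m → ℝ, ℂ)) (x : Fin m → ℝ) :
    Integrable (fun u => A f (x - u) * h u) := by
  simpa using (integrable_apply_mul hC hcont hA f (reflectTranslate x h)).comp_sub_left x

theorem contDiff_kernel_and_mu_le (hC : 0 ≤ C) (hcont : ∀ f, Continuous (A f))
    (hA : ∀ f u, ‖A f u‖ ≤ C * (1 + ‖u‖) ^ p * weightedNorm q l f)
    (g : 𝓢(Fin n → ℝ, ℂ)) (h : 𝓢(Fin m → ℝ, ℂ)) :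
    ContDiff ℝ ∞ (fun z : (Fin m → ℝ) × (Fin n → ℝ) =>
      ∫ u, A (reflectTranslate z.2 g) (z.1 - u) * h u) ∧
    ∀ I : ℕ, mu (-((q + (p + (m + 1)) : ℕ) : ℤ)) I
        (fun z : (Fin m → ℝ) × (Fin n → ℝ) =>
          ∫ u, A (reflectTranslate z.2 g) (z.1 - u) * h u) ≤
      ENNReal.ofReal (2 ^ I * (C * decayIntegral m) * weightedNorm q (l + I) g *
        weightedNorm (p + (m + 1)) I h) := by
  obtain ⟨B, hB, hBle⟩ := exists_pairing hC hcont hA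
  have hJ := decayIntegral_nonneg m
  have hCJ : 0 ≤ C * decayIntegral m := mul_nonneg hC hJ
  have heq : (fun z : (Fin m → ℝ) × (Fin n → ℝ) =>
      ∫ u, A (reflectTranslate z.2 g) (z.1 - u) * h u) = translatedForm B g h := by
    ext z
    rw [translatedForm, hB, ← integral_sub_left_eq_self _ _ z.1]
    simp
  rw [heq]
  refine ⟨contDiff_translatedForm hCJ hBle g h, fun I => ?_⟩
  have hg := weightedNorm_nonneg q (l + I) g
  have hh := weightedNorm_nonneg (p + (m + 1)) I h
  refine (mu_le_ofReal_iff (by positivity)).2 fun z i hi => ?_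
  have hle := norm_iteratedFDeriv_translatedForm_le hCJ hBle g h i z
  have hg' := weightedNorm_mono (k := q) (show l + i ≤ l + I by omega) g
  have hh' := weightedNorm_mono (k := p + (m + 1)) (show 0 + i ≤ I by omega) h
  have hi0 := weightedNorm_nonneg (p + (m + 1)) (0 + i) h
  have hpos : (0 : ℝ) < (1 + ‖z‖) ^ (q + (p + (m + 1))) := by positivity
  rw [zpow_neg, zpow_natCast, inv_mul_le_iff₀ hpos]
  calc _ ≤ _ := hle
    _ ≤ 2 ^ I * (C * decayIntegral m) * (1 + ‖z‖) ^ (q + (p + (m + 1))) *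
        weightedNorm q (l + I) g * weightedNorm (p + (m + 1)) I h := by
      have hgi := weightedNorm_nonneg q (l + i) g
      gcongr
      norm_num
    _ = _ := by ring

theorem norm_apply_le_of_mu_le (hC : 0 ≤ C)
    (hA : ∀ f : 𝓢(Fin n → ℝ, ℂ), mu (-(p : ℤ)) 0 (A f) ≤ ENNReal.ofReal C * mu (q : ℤ) l f)
    (f : 𝓢(Fin n → ℝ, ℂ)) (u : Fin m → ℝ) :
    ‖A f u‖ ≤ C * (1 + ‖u‖) ^ p * weightedNorm q l f := by
  have hf := weightedNorm_nonneg q l f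
  have h := hA f
  rw [← ofReal_weightedNorm, ← ENNReal.ofReal_mul hC, mu_le_ofReal_iff (by positivity)] at h
  have hu := h u 0 le_rfl
  rw [norm_iteratedFDeriv_zero, zpow_neg, zpow_natCast, inv_mul_le_iff₀ (by positivity)] at hu
  exact hu.trans_eq (by ring)

/-- Smoothness and growth of the kernel built from scaled mollifiers. -/
theorem contDiff_scaledKernel_and_mu_le (hC : 0 ≤ C) (hcont : ∀ f, Continuous (A f))
    (hA : ∀ f : 𝓢(Fin n → ℝ, ℂ), mu (-(p : ℤ)) 0 (A f) ≤ ENNReal.ofReal C * mu (q : ℤ) l f)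
    (ψ : 𝓢(Fin n → ℝ, ℂ)) (φ : 𝓢(Fin m → ℝ, ℂ)) {ε : ℝ} (hε : ε ∈ Set.Ioc (0 : ℝ) 1)
    (Ψ : (Fin n → ℝ) → 𝓢(Fin n → ℝ, ℂ)) (hΨ : ∀ y v, Ψ y v = scaled ψ ε (y - v)) :
    (∀ x y, Integrable (fun u => A (Ψ y) (x - u) * scaled φ ε u)) ∧
    ContDiff ℝ ∞ (fun z : (Fin m → ℝ) × (Fin n → ℝ) =>
      ∫ u, A (Ψ z.2) (z.1 - u) * scaled φ ε u) ∧
    ∀ I : ℕ, mu (-((q + (p + (m + 1)) : ℕ) : ℤ)) I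
        (fun z : (Fin m → ℝ) × (Fin n → ℝ) => ∫ u, A (Ψ z.2) (z.1 - u) * scaled φ ε u) ≤
      ENNReal.ofReal (2 ^ I * decayIntegral m * weightedNorm q (l + I) ψ *
        weightedNorm (p + (m + 1)) I φ * C * ε ^ (-((n + (l + I) + (m + I) : ℕ) : ℤ))) := by
  obtain ⟨h0, h1⟩ := hε
  obtain ⟨g, hg, hgle⟩ := exists_schwartzMap_eq_scaled ψ h0 h1
  obtain ⟨h, hh, hhle⟩ := exists_schwartzMap_eq_scaled φ h0 h1
  have hΨg : Ψ = fun y => reflectTranslate y g := by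
    ext y v
    rw [hΨ, reflectTranslate_apply, hg]
  have hA' := norm_apply_le_of_mu_le hC hA
  obtain ⟨hsm, hmu⟩ := contDiff_kernel_and_mu_le hC hcont hA' g h
  rw [← hh, hΨg]
  refine ⟨fun x y => integrable_apply_sub_mul hC hcont hA' _ h x, hsm, fun I => (hmu I).trans ?_⟩
  refine ENNReal.ofReal_le_ofReal ?_
  have hJ := decayIntegral_nonneg m
  have n1 := weightedNorm_nonneg q (l + I) ψ
  have n2 := weightedNorm_nonneg (p + (m + 1)) I h
  calc _ ≤ 2 ^ I * (C * decayIntegral m) *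
        (ε ^ (-((n + (l + I) : ℕ) : ℤ)) * weightedNorm q (l + I) ψ) *
        (ε ^ (-((m + I : ℕ) : ℤ)) * weightedNorm (p + (m + 1)) I φ) := by
        gcongr
        exacts [hgle _ _, hhle _ _]
    _ = _ := by
      rw [Nat.cast_add (n + (l + I)), neg_add, zpow_add₀ h0.ne']
      ring

end Kernel

/-- the kernel net `H_ε(x,y) = (L_ε(ψ_{ε,y}) ∗ φ_ε)(x)` associated to a
moderate net of linear maps is well defined and belongs to `E_τ(ℝ^{m+n})`. -/
theorem stmt13 (m n : ℕ) (hm : 1 ≤ m) (hn : 1 ≤ n)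
    (L : ℝ → SchwartzMap (Fin n → ℝ) ℂ →ₗ[ℂ] ((Fin m → ℝ) → ℂ))
    (hL : ModerateNetMaps m n (fun ε => ⇑(L ε)))
    (hcont : ∀ ε ∈ Set.Ioc (0:ℝ) 1, ContinuousIntoOM m n ⇑(L ε))
    (ψ : SchwartzMap (Fin n → ℝ) ℂ) (hψ : IsMollifier ψ)
    (φ : SchwartzMap (Fin m → ℝ) ℂ) (hφ : IsMollifier φ)
    (Ψ : ℝ → (Fin n → ℝ) → SchwartzMap (Fin n → ℝ) ℂ)
    (hΨ : ∀ ε ∈ Set.Ioc (0:ℝ) 1, ∀ y v, Ψ ε y v = scaled ⇑ψ ε (y - v)) :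
    (∀ ε ∈ Set.Ioc (0:ℝ) 1, ∀ (x : Fin m → ℝ) (y : Fin n → ℝ),
      MeasureTheory.Integrable (fun u : Fin m → ℝ => L ε (Ψ ε y) (x - u) * scaled ⇑φ ε u)) ∧
    IsEtauNet (fun ε (z : (Fin m → ℝ) × (Fin n → ℝ)) =>
      ∫ u : Fin m → ℝ, L ε (Ψ ε z.2) (z.1 - u) * scaled ⇑φ ε u) := by
  have hLcont : ∀ ε ∈ Set.Ioc (0 : ℝ) 1, ∀ f, Continuous (L ε f) := fun ε hε f =>
    (hL.1 ε hε f).1.continuous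
  refine ⟨fun ε hε => ?_, fun ε hε => ?_, fun l => ?_⟩
  · obtain ⟨C, hC, p, q, l', hLC⟩ := hcont ε hε 0
    exact (contDiff_scaledKernel_and_mu_le hC (hLcont ε hε) hLC ψ φ hε (Ψ ε) (hΨ ε hε)).1
  · obtain ⟨C, hC, p, q, l', hLC⟩ := hcont ε hε 0
    obtain ⟨-, hsm, hmu⟩ :=
      contDiff_scaledKernel_and_mu_le hC (hLcont ε hε) hLC ψ φ hε (Ψ ε) (hΨ ε hε)
    exact ⟨hsm, fun l => ⟨_, (hmu l).trans_lt ENNReal.ofReal_lt_top⟩⟩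
  · obtain ⟨C, hC, ⟨N, C₀, hC₀, η₁, hη₁, hCle⟩, p, q, l', η₂, hη₂, hLC⟩ := hL.2 0
    set K := 2 ^ l * decayIntegral m * weightedNorm q (l' + l) ψ *
      weightedNorm (p + (m + 1)) l φ with hK
    have hK0 : 0 ≤ K := by
      have := decayIntegral_nonneg m
      have := weightedNorm_nonneg q (l' + l) ψ
      have := weightedNorm_nonneg (p + (m + 1)) l φ
      positivity
    refine ⟨q + (p + (m + 1)), N + (n + (l' + l) + (m + l)), K * C₀ + 1, by positivity,
      min 1 (min η₁ η₂), by positivity, fun ε h0 hle => ?_⟩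
    simp only [le_min_iff] at hle
    have hε : ε ∈ Set.Ioc (0 : ℝ) 1 := ⟨h0, hle.1⟩
    refine ((contDiff_scaledKernel_and_mu_le (hC ε) (hLcont ε hε) (hLC ε h0 hle.2.2) ψ φ hε
      (Ψ ε) (hΨ ε hε)).2.2 l).trans (ENNReal.ofReal_le_ofReal ?_)
    rw [← hK]
    calc _ ≤ K * (C₀ * ε ^ (-(N : ℤ))) * ε ^ (-((n + (l' + l) + (m + l) : ℕ) : ℤ)) := by
          gcongr
          exact hCle ε h0 hle.2.1
      _ = K * C₀ * ε ^ (-((N + (n + (l' + l) + (m + l)) : ℕ) : ℤ)) := by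
          rw [Nat.cast_add N, neg_add, zpow_add₀ h0.ne']
          ring
      _ ≤ _ := by
          gcongr
          linarith
end
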